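/- The family 𝔑₂(*) degenerates to 𝔑₁: the structure λ with table e₁e₂ = e₃, e₂e₁ = e₄, e₂e₂ = −e₃ lies in the closure of the union ⋃_{γ∈ℂ} O(μ_γ), where μ_γ is the structure with table e₁e₁ = e₃, e₁e₂ = e₄, e₂e₁ = −γe₃, e₂e₂ = −e₄. -/

import Mathlib

noncomputable section

/-- `V = ℂ⁴`. -/
abbrev V : Type := Fin 4 → ℂ

/-- The standard basis vectors `e₁, e₂, e₃, e₄` of `V` (indexed by `0, 1, 2, 3`). -/
def e (i : Fin 4) : V := Pi.single i 1

/-- The `GL(V)`-orbit `O(μ)` of an algebra structure `μ` on `V`, for the action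
`(g • μ)(x, y) = g (μ (g⁻¹ x) (g⁻¹ y))`. -/
def orbit (μ : V →L[ℂ] V →L[ℂ] V) : Set (V →L[ℂ] V →L[ℂ] V) :=
  {ν | ∃ g : V ≃L[ℂ] V, ∀ x y : V, ν x y = g (μ (g.symm x) (g.symm y))}

def gEquiv (t : ℂ) (ht : t ≠ 0) : V ≃ₗ[ℂ] V where
  toFun x := ![x 0, x 1, x 3, -t * x 2]
  invFun x := ![x 0, x 1, -t⁻¹ * x 3, x 2]
  map_add' x y := by
    ext i; fin_cases i <;> simp; ring
  map_smul' c x := by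
    ext i; fin_cases i <;> simp; ring
  left_inv x := by
    ext i; fin_cases i <;> simp [ht]
  right_inv x := by
    ext i; fin_cases i <;> simp [ht]

theorem tendsto_aux {E : Type*} [NormedAddCommGroup E] [NormedSpace ℂ E] (a b : E) :
    Filter.Tendsto (fun t : ℂ => a - t • b) (nhdsWithin 0 {0}ᶜ) (nhds a) := by
  have h : Continuous (fun t : ℂ => a - t • b) := by fun_prop
  have h0 := h.tendsto 0
  simp only [zero_smul, sub_zero] at h0
  exact h0.mono_left nhdsWithin_le_nhds

theorem V_expand (x : V) : x = x 0 • e 0 + x 1 • e 1 + x 2 • e 2 + x 3 • e 3 := by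
  ext i; fin_cases i <;> simp [e]

theorem bil_expand (m : V →L[ℂ] V →L[ℂ] V) (x y : V) :
    m x y = ∑ i, ∑ j, (x i * y j) • m (e i) (e j) := by
  conv_lhs => rw [V_expand x, V_expand y]
  simp only [map_add, map_smul, ContinuousLinearMap.add_apply, ContinuousLinearMap.smul_apply,
    Fin.sum_univ_four, smul_add, smul_smul]
  simp only [mul_comm]
  abel

def Bform : V →L[ℂ] V →L[ℂ] V :=
  (ContinuousLinearMap.proj (R := ℂ) (φ := fun _ : Fin 4 => ℂ) 0).smulRight
    ((ContinuousLinearMap.proj (R := ℂ) (φ := fun _ : Fin 4 => ℂ) 0).smulRight (e 3))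

theorem Bform_apply (x y : V) : Bform x y = x 0 • y 0 • e 3 := by
  simp [Bform]

/-- The family `𝔑₂(*) = {𝔑₂(γ)}_{γ ∈ ℂ}` degenerates to `𝔑₁`: the structure of `𝔑₁`
lies in the closure of the union of the orbits `O(𝔑₂(γ))`. -/
theorem stmt18 (μ : ℂ → (V →L[ℂ] V →L[ℂ] V)) (lam : V →L[ℂ] V →L[ℂ] V)
    (hμ : ∀ (γ : ℂ) (i j : Fin 4), μ γ (e i) (e j) =
    (![
      ![e 2, e 3, 0, 0],
      ![(-γ) • e 2, -e 3, 0, 0],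
      ![0, 0, 0, 0],
      ![0, 0, 0, 0]
     ] : Fin 4 → Fin 4 → V) i j)
    (hlam : ∀ i j : Fin 4, lam (e i) (e j) =
    (![
      ![0, e 2, 0, 0],
      ![e 3, -e 2, 0, 0],
      ![0, 0, 0, 0],
      ![0, 0, 0, 0]
     ] : Fin 4 → Fin 4 → V) i j) :
    lam ∈ closure (⋃ γ : ℂ, orbit (μ γ)) := by
  have hc : Filter.Tendsto (fun t : ℂ => lam - t • Bform) (nhdsWithin 0 {0}ᶜ) (nhds lam) := by
    exact tendsto_aux (E := (Fin 4 → ℂ) →L[ℂ] (Fin 4 → ℂ) →L[ℂ] (Fin 4 → ℂ)) lam Bform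
  refine mem_closure_of_tendsto hc ?_
  filter_upwards [self_mem_nhdsWithin] with t ht
  have ht' : t ≠ 0 := ht
  refine Set.mem_iUnion.2 ⟨t⁻¹, (gEquiv t ht').toContinuousLinearEquiv, fun x y => ?_⟩
  change lam x y - t • Bform x y =
    ![_, _, _, _]
  rw [bil_expand lam, Bform_apply]
  have key := bil_expand (μ t⁻¹) ![x 0, x 1, -t⁻¹ * x 3, x 2] ![y 0, y 1, -t⁻¹ * y 3, y 2]
  change _ = gEquiv t ht' (μ t⁻¹ ![x 0, x 1, -t⁻¹ * x 3, x 2] ![y 0, y 1, -t⁻¹ * y 3, y 2])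
  rw [key]
  simp only [hμ, hlam, Fin.sum_univ_four]
  ext i
  fin_cases i <;> simp [gEquiv, e] <;> field_simp <;> ring
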